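/- arXiv:1510.02421 — 5 statements merged into one kernel-verified Lean document; each statement's English description precedes it below -/
import Mathlib

section
/- Let G be a finite simple graph and let n ≥ 4. Then the zero forcing number of the tensor product of G with the complete graph K_n satisfies Z(G × K_n) ≤ (n−2)·|V(G)| + 2·Z⁻(G), where Z⁻(G) is the skew zero forcing number of G. -/
namespace PaperPD

open SimpleGraph

variable {V α β : Type*}

/-- Vertices that eventually become blue in the standard zero forcing process
starting from the blue set `B`. -/
inductive ZFClosure (G : SimpleGraph V) (B : Set V) : V → Prop
  | init (v : V) (hv : v ∈ B) : ZFClosure G B v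
  | force (u w : V) (hu : ZFClosure G B u) (huw : G.Adj u w)
      (h : ∀ x, G.Adj u x → x ≠ w → ZFClosure G B x) : ZFClosure G B w

/-- `B` is a zero forcing set of `G`. -/
def IsZeroForcingSet (G : SimpleGraph V) (B : Set V) : Prop :=
  ∀ v, ZFClosure G B v

/-- The zero forcing number `Z(G)`. -/
noncomputable def zeroForcingNumber (G : SimpleGraph V) [Fintype V] : ℕ :=
  sInf {k | ∃ B : Finset V, B.card = k ∧ IsZeroForcingSet G ↑B}

/-- Vertices that eventually become blue in the skew zero forcing process
starting from the blue set `B` (the forcing vertex need not be blue). -/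
inductive SkewZFClosure (G : SimpleGraph V) (B : Set V) : V → Prop
  | init (v : V) (hv : v ∈ B) : SkewZFClosure G B v
  | force (u w : V) (huw : G.Adj u w)
      (h : ∀ x, G.Adj u x → x ≠ w → SkewZFClosure G B x) : SkewZFClosure G B w

/-- `B` is a skew zero forcing set of `G`. -/
def IsSkewZeroForcingSet (G : SimpleGraph V) (B : Set V) : Prop :=
  ∀ v, SkewZFClosure G B v

/-- The skew zero forcing number `Z⁻(G)`. -/
noncomputable def skewZeroForcingNumber (G : SimpleGraph V) [Fintype V] : ℕ :=
  sInf {k | ∃ B : Finset V, B.card = k ∧ IsSkewZeroForcingSet G ↑B}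

/-- The closed neighborhood `N[S]` of a set of vertices. -/
def closedNbhd (G : SimpleGraph V) (S : Set V) : Set V :=
  S ∪ {v | ∃ u ∈ S, G.Adj u v}

/-- `S` is a power dominating set of `G`, i.e. `N[S]` is a zero forcing set. -/
def IsPowerDominatingSet (G : SimpleGraph V) (S : Set V) : Prop :=
  IsZeroForcingSet G (closedNbhd G S)

/-- The power domination number `γ_P(G)`. -/
noncomputable def powerDominationNumber (G : SimpleGraph V) [Fintype V] : ℕ :=
  sInf {k | ∃ S : Finset V, S.card = k ∧ IsPowerDominatingSet G ↑S}

/-- `S` is a dominating set of `G` (`N[S] = V`). -/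
def IsDominatingSet (G : SimpleGraph V) (S : Set V) : Prop :=
  ∀ v, v ∈ closedNbhd G S

/-- The domination number `γ(G)`. -/
noncomputable def dominationNumber (G : SimpleGraph V) [Fintype V] : ℕ :=
  sInf {k | ∃ S : Finset V, S.card = k ∧ IsDominatingSet G ↑S}

/-- `S` is a total dominating set of `G` (`N(S) = V`). -/
def IsTotalDominatingSet (G : SimpleGraph V) (S : Set V) : Prop :=
  ∀ v, ∃ u ∈ S, G.Adj u v

/-- The total domination number `γ_t(G)`. -/
noncomputable def totalDominationNumber (G : SimpleGraph V) [Fintype V] : ℕ :=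
  sInf {k | ∃ S : Finset V, S.card = k ∧ IsTotalDominatingSet G ↑S}

/-- The degree of a vertex. -/
noncomputable def deg (G : SimpleGraph V) (v : V) : ℕ :=
  (G.neighborSet v).ncard

/-- The maximum degree `Δ(G)`. -/
noncomputable def maxDeg (G : SimpleGraph V) [Fintype V] : ℕ :=
  Finset.univ.sup fun v => deg G v

/-- `A` is a symmetric real matrix whose off-diagonal nonzero pattern is
described by the graph `G`, i.e. `A ∈ S(G)`. -/
def MatrixOfGraph (G : SimpleGraph V) (A : Matrix V V ℝ) : Prop :=
  A.IsSymm ∧ ∀ i j, i ≠ j → (A i j ≠ 0 ↔ G.Adj i j)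

/-- The nullity of a square real matrix. -/
noncomputable def nullity [Fintype V] [DecidableEq V] (A : Matrix V V ℝ) : ℕ :=
  Fintype.card V - A.rank

/-- The maximum nullity `M(G)`. -/
noncomputable def maxNullity (G : SimpleGraph V) [Fintype V] [DecidableEq V] : ℕ :=
  sSup {k | ∃ A : Matrix V V ℝ, MatrixOfGraph G A ∧ nullity A = k}

/-- The tensor (direct) product of two simple graphs. -/
def tensorProd (G : SimpleGraph α) (H : SimpleGraph β) : SimpleGraph (α × β) where
  Adj p q := G.Adj p.1 q.1 ∧ H.Adj p.2 q.2
  symm := ⟨fun _ _ h => ⟨h.1.symm, h.2.symm⟩⟩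
  loopless := ⟨fun p h => G.loopless.irrefl p.1 h.1⟩

/-- The lexicographic product of two simple graphs. -/
def lexProd (G : SimpleGraph α) (H : SimpleGraph β) : SimpleGraph (α × β) where
  Adj p q := G.Adj p.1 q.1 ∨ (p.1 = q.1 ∧ H.Adj p.2 q.2)
  symm := ⟨fun _ _ h => h.elim (fun h' => Or.inl h'.symm) (fun h' => Or.inr ⟨h'.1.symm, h'.2.symm⟩)⟩
  loopless := ⟨fun p h => h.elim (fun h' => G.loopless.irrefl p.1 h') (fun h' => H.loopless.irrefl p.2 h'.2)⟩

/-!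
Order the vertices of `G` as a skew zero forcing set turns them blue. A force `u → w` made by a
vertex `u` that is still white happens at most once for each `u`, and `w` turns blue before `u`
does. Choosing colours in the order of turning blue, the vertices can therefore be coloured with two
colours such that `u` and `w` differ in every such force.

Let `H` be a graph with two disjoint edges, such as `K_n` for `n ≥ 4`. Give each colour one of these
edges, and in `G × H` leave white exactly the pairs `(v, i)` with `v` outside the skew forcing set
and `i` an endpoint of the edge of `v`. A force `u → w` in `G` then lifts: `(w, i)` is forced by
`(u, j)`, where `j` is the other endpoint of the edge of `w`, since `(u, j)` is blue either because
the whole fibre of `u` is, or because `j` is not on the edge of `u`.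
-/

section

variable {W γ : Type*} {G : SimpleGraph V} {H : SimpleGraph W} {B S : Set V} {c : V → γ}

/-- Vertices that eventually become blue, starting from `B`, in the variant of skew zero forcing
in which a white vertex may only force a vertex whose colour under `c` differs from its own.
The colouring `c` need not be proper. -/
inductive ColoredSkewZFClosure (G : SimpleGraph V) (B : Set V) (c : V → γ) : V → Prop
  | init (v : V) (hv : v ∈ B) : ColoredSkewZFClosure G B c v
  | force (u w : V) (hu : c u = c w → ColoredSkewZFClosure G B c u) (huw : G.Adj u w)
      (h : ∀ x, G.Adj u x → x ≠ w → ColoredSkewZFClosure G B c x) : ColoredSkewZFClosure G B c w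

lemma ColoredSkewZFClosure.trans {v : V} (hS : ∀ x ∈ S, ColoredSkewZFClosure G B c x)
    (hv : ColoredSkewZFClosure G S c v) : ColoredSkewZFClosure G B c v := by
  induction hv with
  | init v hv => exact hS v hv
  | force u w _ huw _ ihu ih => exact .force u w ihu huw ih

lemma IsSkewZeroForcingSet.mono (hB : IsSkewZeroForcingSet G B) (hBS : B ⊆ S) :
    IsSkewZeroForcingSet G S := by
  intro v
  induction hB v with
  | init v hv => exact .init v (hBS hv)
  | force u w huw _ ih => exact .force u w huw ih

lemma IsSkewZeroForcingSet.exists_force (hB : IsSkewZeroForcingSet G B) (hne : B ≠ Set.univ) :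
    ∃ u, ∃ w ∉ B, G.Adj u w ∧ ∀ x, G.Adj u x → x ≠ w → x ∈ B := by
  by_contra! hstuck
  refine hne (Set.eq_univ_of_forall fun v => ?_)
  induction hB v with
  | init _ hv => exact hv
  | force u w huw _ ih =>
    by_contra hw
    obtain ⟨x, hux, hxw, hx⟩ := hstuck u w hw huw
    exact hx (ih x hux hxw)

lemma IsSkewZeroForcingSet.exists_coloring [Finite V] [Nontrivial γ]
    (hB : IsSkewZeroForcingSet G B) (c₀ : V → γ) :
    ∃ c : V → γ, (∀ v, v ∈ B ∨ G.neighborSet v ⊆ B → c v = c₀ v) ∧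
      ∀ v, ColoredSkewZFClosure G B c v := by
  classical
  induction B using WellFoundedGT.induction generalizing c₀ with
  | ind B ih =>
  obtain rfl | hne := eq_or_ne B Set.univ
  · exact ⟨c₀, fun _ _ => rfl, fun v => .init v (Set.mem_univ v)⟩
  obtain ⟨u, w, hwB, huw, hforce⟩ := hB.exists_force hne
  obtain ⟨k, hk⟩ := exists_ne (c₀ w)
  -- A white `u` still has the white neighbour `w`, so its colour has not been fixed yet.
  obtain ⟨c, hc, hblue⟩ := ih (insert w B) (Set.ssubset_insert hwB)
    (hB.mono (Set.subset_insert w B)) (if u ∈ B then c₀ else Function.update c₀ u k)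
  have hu_saturated : G.neighborSet u ⊆ insert w B := fun x hux =>
    or_iff_not_imp_left.2 (hforce x hux)
  have hw : ColoredSkewZFClosure G B c w := by
    refine .force u w (fun hcuw => ?_) huw fun x hux hxw => .init x (hforce x hux hxw)
    by_contra hu
    have huB : u ∉ B := fun h => hu (.init u h)
    rw [hc u (.inr hu_saturated), hc w (.inl (Set.mem_insert w B)), if_neg huB,
      Function.update_self, Function.update_of_ne huw.ne'] at hcuw
    exact hk hcuw
  refine ⟨c, fun v hv => ?_, fun v => (hblue v).trans ?_⟩
  · have hvu : u ∉ B → v ≠ u := by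
      rintro huB rfl
      exact hv.elim huB fun hN => hwB (hN huw)
    rw [hc v (hv.imp (Set.mem_insert_of_mem w) (·.trans (Set.subset_insert w B)))]
    split_ifs with huB
    · rfl
    · exact Function.update_of_ne (hvu huB) k c₀
  · rintro x (rfl | hx)
    exacts [hw, .init x hx]

/-- The initial blue set of `G × H` built from a blue set `B` of `G` and a pair `e v` of vertices of
`H` for each vertex `v` of `G`: only the two points of `e v` over a vertex `v ∉ B` are white. -/
def liftedBlueSet (B : Set V) (e : V → Sym2 W) : Set (V × W) :=
  {p | p.2 ∈ e p.1 → p.1 ∈ B}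

lemma ColoredSkewZFClosure.zfClosure_tensorProd {e : γ → Sym2 W} (he : ∀ k, e k ∈ H.edgeSet)
    (hdisj : Pairwise fun k l => Disjoint (e k : Set W) (e l)) {v : V}
    (hv : ColoredSkewZFClosure G B c v) (i : W) :
    ZFClosure (tensorProd G H) (liftedBlueSet B (e ∘ c)) (v, i) := by
  induction hv generalizing i with
  | init v hv => exact .init _ fun _ => hv
  | force u w _ huw _ ihu ih =>
    by_cases hi : i ∈ e (c w)
    swap
    · exact .init _ fun h => absurd h hi
    obtain ⟨j, hij⟩ := hi
    have hadj : H.Adj j i := by simpa [hij, H.adj_comm] using he (c w)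
    refine .force (u, j) (w, i) ?_ ⟨huw, hadj⟩ ?_
    · by_cases hc : c u = c w
      · exact ihu hc j
      · have hj : j ∈ e (c w) := hij ▸ Sym2.mem_mk_right i j
        exact .init _ fun hju => (Set.disjoint_left.1 (hdisj hc) hju hj).elim
    · rintro ⟨x, l⟩ ⟨hux, hjl⟩ hne
      obtain rfl | hxw := eq_or_ne x w
      · refine .init _ fun hl => ?_
        obtain rfl | rfl : l = i ∨ l = j := by simpa [hij] using hl
        exacts [(hne rfl).elim, (H.irrefl hjl).elim]
      · exact ih x hux hxw l

lemma ncard_liftedBlueSet_le [Fintype V] [Fintype W] (B : Finset V) {e : V → Sym2 W}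
    (he : ∀ v, ¬ (e v).IsDiag) :
    (liftedBlueSet (B : Set V) e).ncard ≤
      (Fintype.card W - 2) * Fintype.card V + 2 * B.card := by
  classical
  have hfibre (v : V) : (Finset.univ.filter fun i => i ∈ e v → v ∈ B).card ≤
      (Fintype.card W - 2) + if v ∈ B then 2 else 0 := by
    by_cases hv : v ∈ B
    · simp only [hv, implies_true, Finset.filter_true, Finset.card_univ, if_true]
      omega
    · have hcompl : (Finset.univ.filter fun i => i ∈ e v → v ∈ B) = (e v).toFinsetᶜ := by
        ext i
        simp [hv]
      rw [hcompl, Finset.card_compl, Sym2.card_toFinset_of_not_isDiag _ (he v)]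
      exact Nat.le_add_right _ _
  calc (liftedBlueSet (B : Set V) e).ncard
      = (Finset.univ.filter fun p : V × W => p.2 ∈ e p.1 → p.1 ∈ B).card := by
        rw [← Set.ncard_coe_finset]
        simp [liftedBlueSet]
    _ = ∑ v, (Finset.univ.filter fun i => i ∈ e v → v ∈ B).card := by
        simp only [Finset.card_filter, Fintype.sum_prod_type]
    _ ≤ ∑ v, ((Fintype.card W - 2) + if v ∈ B then 2 else 0) :=
        Finset.sum_le_sum fun v _ => hfibre v
    _ = (Fintype.card W - 2) * Fintype.card V + 2 * B.card := by
        simp [Finset.sum_add_distrib, mul_comm]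

lemma zeroForcingNumber_le_ncard [Fintype V] (hB : IsZeroForcingSet G B) :
    zeroForcingNumber G ≤ B.ncard :=
  Nat.sInf_le ⟨B.toFinite.toFinset, (Set.ncard_eq_toFinset_card B).symm, by simpa using hB⟩

lemma exists_isSkewZeroForcingSet_card_eq [Fintype V] (G : SimpleGraph V) :
    ∃ B : Finset V, B.card = skewZeroForcingNumber G ∧ IsSkewZeroForcingSet G ↑B :=
  Nat.sInf_mem (s := {k | ∃ B : Finset V, B.card = k ∧ IsSkewZeroForcingSet G ↑B})
    ⟨_, Finset.univ, rfl, fun v => .init v (Finset.mem_coe.2 (Finset.mem_univ v))⟩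

end

theorem stmt0_general {V W : Type*} [Fintype V] [Fintype W] (G : SimpleGraph V)
    (H : SimpleGraph W) {e₁ e₂ : Sym2 W} (he₁ : e₁ ∈ H.edgeSet) (he₂ : e₂ ∈ H.edgeSet)
    (hdisj : Disjoint (e₁ : Set W) e₂) :
    zeroForcingNumber (tensorProd G H) ≤
      (Fintype.card W - 2) * Fintype.card V + 2 * skewZeroForcingNumber G := by
  let e : Bool → Sym2 W := fun k => cond k e₁ e₂
  have he : ∀ k, e k ∈ H.edgeSet := Bool.forall_bool.2 ⟨he₂, he₁⟩
  have hpair : Pairwise fun k l => Disjoint (e k : Set W) (e l) := by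
    rintro (_ | _) (_ | _) hkl
    exacts [(hkl rfl).elim, hdisj.symm, hdisj, (hkl rfl).elim]
  obtain ⟨B, hcard, hB⟩ := exists_isSkewZeroForcingSet_card_eq G
  obtain ⟨c, -, hblue⟩ := hB.exists_coloring fun _ => true
  have hforcing : IsZeroForcingSet (tensorProd G H) (liftedBlueSet ↑B (e ∘ c)) :=
    fun p => (hblue p.1).zfClosure_tensorProd he hpair p.2
  rw [← hcard]
  exact (zeroForcingNumber_le_ncard hforcing).trans
    (ncard_liftedBlueSet_le B fun v => H.not_isDiag_of_mem_edgeSet (he (c v)))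

/-- For any finite simple graph `G` and `n ≥ 4`,
`Z(G × K_n) ≤ (n−2)·|V(G)| + 2·Z⁻(G)`. -/
theorem stmt0 {V : Type*} [Fintype V] (G : SimpleGraph V) (n : ℕ) (hn : 4 ≤ n) :
    zeroForcingNumber (tensorProd G (⊤ : SimpleGraph (Fin n))) ≤
      (n - 2) * Fintype.card V + 2 * skewZeroForcingNumber G := by
  let i : Fin 4 → Fin n := Fin.castLE hn
  simpa using stmt0_general G ⊤ (e₁ := s(i 0, i 1)) (e₂ := s(i 2, i 3))
    (by simp [i]) (by simp [i]) (by simp [i, Set.disjoint_left])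

end PaperPD
end

section
/- Let H_3 be the 3-sun, i.e., the graph on six vertices obtained from a triangle by attaching one pendant vertex to each vertex of the triangle. Then Z(H_3 × K_3) ≥ 7. In particular, since Z⁻(H_3) = 0, the bound Z(G × K_n) ≤ (n−2)|V(G)| + 2Z⁻(G) fails for G = H_3 and n = 3. -/
namespace PaperPD

open SimpleGraph

variable {V α β : Type*}

/-- The 3-sun: a triangle on vertices 0, 1, 2 with pendant vertices 3, 4, 5
attached to 0, 1, 2 respectively. -/
def sun3 : SimpleGraph (Fin 6) :=
  SimpleGraph.fromRel (fun i j =>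
    (i = 0 ∧ j = 1) ∨ (i = 0 ∧ j = 2) ∨ (i = 1 ∧ j = 2) ∨
    (i = 0 ∧ j = 3) ∨ (i = 1 ∧ j = 4) ∨ (i = 2 ∧ j = 5))

/-!
Every fort meets every zero forcing set. Each fibre of `G × K_n`, `n ≥ 3`, over a vertex of `G` is a
fort, so a zero forcing set of `H₃ × K₃` with at most six vertices has the form `{(v, f v)}`. Run
the process from there: if `f` differs at a triangle vertex `a` and its pendant vertex `a'`, then
`(a', f a')` forces all of the fibre over `a` except `(a, f a')`; otherwise nothing happens over `a`
and over `a'`. The process then stalls, and the white vertices are a fort, unless there is a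
triangle vertex `a` such that all triangle vertices `b ≠ a` have `f b ≠ f b'` and share the value of
`f b'`; in that case the white vertices over these `b` and `b'` alone are a fort. So six vertices
never suffice. The same forts work for any `K_m`, `m ≥ 3`, in place of the triangle and for any
`K_n`, `n ≥ 3`, in place of `K₃`.
-/

open scoped Cardinal

theorem not_existsUnique_of_ne {p : α → Prop} {x y : α} (hx : p x) (hy : p y) (hxy : x ≠ y) :
    ¬∃! z, p z :=
  fun h => hxy (h.unique hx hy)

section Transport

variable {W : Type*} {G : SimpleGraph V} {H : SimpleGraph W}

theorem ZFClosure.map (e : G ≃g H) {B : Set V} {v : V} (hv : ZFClosure G B v) :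
    ZFClosure H (e '' B) (e v) := by
  induction hv with
  | init v hv => exact .init _ (Set.mem_image_of_mem e hv)
  | force u w _ huw _ ihu ih =>
    refine .force (e u) (e w) ihu (e.map_adj_iff.2 huw) fun y huy hyw => ?_
    obtain ⟨x, rfl⟩ := e.surjective y
    exact ih x (e.map_adj_iff.1 huy) (ne_of_apply_ne e hyw)

theorem SkewZFClosure.map (e : G ≃g H) {B : Set V} {v : V} (hv : SkewZFClosure G B v) :
    SkewZFClosure H (e '' B) (e v) := by
  induction hv with
  | init v hv => exact .init _ (Set.mem_image_of_mem e hv)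
  | force u w huw _ ih =>
    refine .force (e u) (e w) (e.map_adj_iff.2 huw) fun y huy hyw => ?_
    obtain ⟨x, rfl⟩ := e.surjective y
    exact ih x (e.map_adj_iff.1 huy) (ne_of_apply_ne e hyw)

theorem IsZeroForcingSet.image (e : G ≃g H) {B : Set V} (hB : IsZeroForcingSet G B) :
    IsZeroForcingSet H (e '' B) :=
  e.surjective.forall.2 fun v => (hB v).map e

theorem IsSkewZeroForcingSet.image (e : G ≃g H) {B : Set V} (hB : IsSkewZeroForcingSet G B) :
    IsSkewZeroForcingSet H (e '' B) :=
  e.surjective.forall.2 fun v => (hB v).map e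

theorem exists_isZeroForcingSet_card_eq_of_iso (e : G ≃g H) {k : ℕ}
    (h : ∃ B : Finset V, B.card = k ∧ IsZeroForcingSet G B) :
    ∃ B : Finset W, B.card = k ∧ IsZeroForcingSet H B := by
  obtain ⟨B, hk, hB⟩ := h
  refine ⟨B.map e.toEquiv.toEmbedding, by rwa [Finset.card_map], ?_⟩
  rw [Finset.coe_map]
  exact hB.image e

theorem exists_isSkewZeroForcingSet_card_eq_of_iso (e : G ≃g H) {k : ℕ}
    (h : ∃ B : Finset V, B.card = k ∧ IsSkewZeroForcingSet G B) :
    ∃ B : Finset W, B.card = k ∧ IsSkewZeroForcingSet H B := by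
  obtain ⟨B, hk, hB⟩ := h
  refine ⟨B.map e.toEquiv.toEmbedding, by rwa [Finset.card_map], ?_⟩
  rw [Finset.coe_map]
  exact hB.image e

theorem zeroForcingNumber_congr [Fintype V] [Fintype W] (e : G ≃g H) :
    zeroForcingNumber G = zeroForcingNumber H :=
  congrArg sInf <| Set.ext fun _ =>
    ⟨exists_isZeroForcingSet_card_eq_of_iso e, exists_isZeroForcingSet_card_eq_of_iso e.symm⟩

theorem skewZeroForcingNumber_congr [Fintype V] [Fintype W] (e : G ≃g H) :
    skewZeroForcingNumber G = skewZeroForcingNumber H :=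
  congrArg sInf <| Set.ext fun _ =>
    ⟨exists_isSkewZeroForcingSet_card_eq_of_iso e,
      exists_isSkewZeroForcingSet_card_eq_of_iso e.symm⟩

/-- The isomorphism of tensor products induced by an isomorphism of the left factors. -/
def tensorProdCongrLeft (e : G ≃g H) (K : SimpleGraph β) : tensorProd G K ≃g tensorProd H K where
  toEquiv := e.toEquiv.prodCongr (Equiv.refl β)
  map_rel_iff' := and_congr_left' e.map_adj_iff

end Transport

section Fort

/-- A fort of `G`: a nonempty set `F` of vertices such that no vertex outside `F` has exactly one
neighbor in `F`. Forts are the obstructions to zero forcing. -/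
def IsFort (G : SimpleGraph V) (F : Set V) : Prop :=
  F.Nonempty ∧ ∀ u ∉ F, ¬∃! w, w ∈ F ∧ G.Adj u w

variable {G : SimpleGraph V} {B F : Set V}

theorem ZFClosure.notMem_of_isFort (hF : IsFort G F) (hBF : Disjoint B F) {v : V}
    (hv : ZFClosure G B v) : v ∉ F := by
  induction hv with
  | init v hv => exact hBF.notMem_of_mem_left hv
  | force u w _ huw _ ihu ih =>
    intro hw
    exact hF.2 u ihu ⟨w, ⟨hw, huw⟩, fun x hx => by_contra fun hxw => ih x hx.2 hxw hx.1⟩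

theorem IsZeroForcingSet.not_disjoint_of_isFort (hB : IsZeroForcingSet G B) (hF : IsFort G F) :
    ¬Disjoint B F := fun hBF =>
  let ⟨v, hv⟩ := hF.1
  (hB v).notMem_of_isFort hF hBF hv

theorem lt_zeroForcingNumber [Fintype V] {k : ℕ}
    (h : ∀ B : Finset V, IsZeroForcingSet G B → k < B.card) : k < zeroForcingNumber G := by
  have hne : {k | ∃ B : Finset V, B.card = k ∧ IsZeroForcingSet G B}.Nonempty :=
    ⟨_, Finset.univ, rfl, fun v => .init v (by simp)⟩
  obtain ⟨B, hcard, hB⟩ := Nat.sInf_mem hne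
  exact (h B hB).trans_eq hcard

end Fort

section Fiber

variable {G : SimpleGraph V}

theorem isFort_fiber (hβ : 3 ≤ #β) (v : V) :
    IsFort (tensorProd G (⊤ : SimpleGraph β)) (Prod.fst ⁻¹' {v}) := by
  have : Nonempty β := Cardinal.mk_ne_zero_iff.1 (by positivity)
  refine ⟨⟨(v, Classical.arbitrary β), rfl⟩, ?_⟩
  rintro ⟨u, i⟩ - h
  obtain ⟨⟨_, j⟩, hw, -⟩ := id h
  obtain ⟨rfl, huv, -⟩ := id hw
  obtain ⟨k, hki, hkj⟩ := Cardinal.exists_ne_ne_of_three_le hβ i j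
  exact hkj (congrArg Prod.snd (h.unique (y₁ := (_, k)) ⟨rfl, huv, hki.symm⟩ hw))

theorem IsZeroForcingSet.exists_mem_fiber (hβ : 3 ≤ #β) {B : Set (V × β)}
    (hB : IsZeroForcingSet (tensorProd G (⊤ : SimpleGraph β)) B) (v : V) : ∃ i, (v, i) ∈ B := by
  obtain ⟨⟨_, i⟩, hi, rfl⟩ := Set.not_disjoint_iff.1 (hB.not_disjoint_of_isFort (isFort_fiber hβ v))
  exact ⟨i, hi⟩

theorem exists_eq_graph_of_card_le [Fintype V] {B : Finset (V × β)} (hB : ∀ v, ∃ i, (v, i) ∈ B)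
    (hcard : B.card ≤ Fintype.card V) : ∃ f : V → β, (B : Set (V × β)) = {p | p.2 = f p.1} := by
  choose f hf using hB
  have hinj : Function.Injective fun v => (v, f v) := fun _ _ h => congrArg Prod.fst h
  have hmap : Finset.univ.map (⟨_, hinj⟩ : V ↪ V × β) = B :=
    Finset.eq_of_subset_of_card_le (by simpa [Finset.subset_iff] using hf) (by simpa using hcard)
  refine ⟨f, Set.ext fun ⟨v, i⟩ => ?_⟩
  simp [← hmap, eq_comm]

end Fiber

section Corona

variable {ι : Type*}

/-- The corona `G ∘ K₁`: a pendant vertex `inr a` is attached to each vertex `inl a` of `G`. -/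
def corona (G : SimpleGraph ι) : SimpleGraph (ι ⊕ ι) where
  Adj
    | .inl a, .inl b => G.Adj a b
    | .inl a, .inr b => a = b
    | .inr a, .inl b => a = b
    | .inr _, .inr _ => False
  symm := ⟨by rintro (a | a) (b | b) h <;> first | exact h.symm | exact h⟩
  loopless := ⟨by rintro (a | a) h; exacts [G.loopless.irrefl a h, h]⟩

variable {G : SimpleGraph ι} {a b : ι}

@[simp] theorem corona_adj_inl_inl : (corona G).Adj (.inl a) (.inl b) ↔ G.Adj a b := Iff.rfl

@[simp] theorem corona_adj_inl_inr : (corona G).Adj (.inl a) (.inr b) ↔ a = b := Iff.rfl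

@[simp] theorem corona_adj_inr_inl : (corona G).Adj (.inr a) (.inl b) ↔ a = b := Iff.rfl

@[simp] theorem not_corona_adj_inr_inr : ¬(corona G).Adj (.inr a) (.inr b) := id

theorem isSkewZeroForcingSet_corona_empty : IsSkewZeroForcingSet (corona G) ∅ := by
  have hinl (a : ι) : SkewZFClosure (corona G) ∅ (.inl a) := by
    refine .force (.inr a) _ (corona_adj_inr_inl.2 rfl) ?_
    rintro (b | b) hab hne
    exacts [absurd (congrArg Sum.inl hab.symm) hne, hab.elim]
  rintro (a | a)
  · exact hinl a
  · refine .force (.inl a) _ (corona_adj_inl_inr.2 rfl) ?_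
    rintro (b | b) hab hne
    exacts [hinl b, absurd (congrArg Sum.inr hab.symm) hne]

theorem skewZeroForcingNumber_corona [Fintype ι] : skewZeroForcingNumber (corona G) = 0 :=
  Nat.sInf_eq_zero.2 <| .inl
    ⟨∅, rfl, by simpa only [Finset.coe_empty] using isSkewZeroForcingSet_corona_empty⟩

end Corona

section StalledSet

variable {ι : Type*} {f : ι ⊕ ι → β} {S : Set ι} {a b : ι} {i : β}

/-- The vertices over `S` and its pendant vertices that are still white once the blue vertices
`(inr a, f (inr a))` have made all their forces, starting from the blue set `{(v, f v)}` in
`(K_m ∘ K₁) × K₃`. -/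
def stalledSet (f : ι ⊕ ι → β) (S : Set ι) : Set ((ι ⊕ ι) × β) :=
  {p | match p with
    | (.inl a, i) => a ∈ S ∧ (f (.inl a) = f (.inr a) ↔ i ≠ f (.inr a))
    | (.inr a, i) => a ∈ S ∧ i ≠ f (.inr a)}

/-- The `b` such that, once `b ∈ S`, some `(inl b, k)` with `k ≠ i` is in `stalledSet f S`. Such a
vertex is adjacent to `(inl a, i)` for every `a ≠ b`. -/
def seenFrom (f : ι ⊕ ι → β) (i : β) : Set ι :=
  {b | f (.inl b) = f (.inr b) ∨ f (.inr b) ≠ i}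

theorem disjoint_graph_stalledSet : Disjoint {p | p.2 = f p.1} (stalledSet f S) := by
  rw [Set.disjoint_left]
  rintro ⟨v, i⟩ hi h
  obtain rfl : i = f v := hi
  rcases v with a | a
  · exact iff_not_self h.2
  · exact h.2 rfl

theorem stalledSet_nonempty (hβ : 3 ≤ #β) (hS : S.Nonempty) : (stalledSet f S).Nonempty := by
  obtain ⟨a, ha⟩ := hS
  obtain ⟨k, hk, -⟩ := Cardinal.exists_ne_ne_of_three_le hβ (f (.inr a)) (f (.inr a))
  exact ⟨(.inr a, k), ha, hk⟩

theorem mem_inter_seenFrom_iff (hβ : 3 ≤ #β) :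
    b ∈ S ∩ seenFrom f i ↔ ∃ k, (Sum.inl b, k) ∈ stalledSet f S ∧ i ≠ k := by
  constructor
  · rintro ⟨hb, hseen⟩
    by_cases hfb : f (.inl b) = f (.inr b)
    · obtain ⟨k, hk, hki⟩ := Cardinal.exists_ne_ne_of_three_le hβ (f (.inr b)) i
      exact ⟨k, ⟨hb, iff_of_true hfb hk⟩, hki.symm⟩
    · exact ⟨f (.inr b), ⟨hb, iff_of_false hfb (not_not_intro rfl)⟩,
        (hseen.resolve_left hfb).symm⟩
  · rintro ⟨k, ⟨hb, hk⟩, hik⟩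
    refine ⟨hb, or_iff_not_imp_left.2 fun hfb => ?_⟩
    rw [← not_not.1 (mt hk.2 hfb)]
    exact hik.symm

local notation "𝓖" => tensorProd (corona (⊤ : SimpleGraph ι)) (⊤ : SimpleGraph β)

theorem not_existsUnique_stalledSet_adj_inr (hβ : 3 ≤ #β) (ha : (Sum.inr a, i) ∉ stalledSet f S) :
    ¬∃! w, w ∈ stalledSet f S ∧ (𝓖).Adj (.inr a, i) w := by
  intro h
  obtain ⟨⟨b | b, j⟩, hw, -⟩ := id h
  · obtain ⟨hj, hab, hij⟩ := id hw
    obtain rfl : a = b := hab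
    obtain rfl : i = f (.inr a) := by_contra fun hi => ha ⟨hj.1, hi⟩
    obtain ⟨k, hki, hkj⟩ := Cardinal.exists_ne_ne_of_three_le hβ (f (.inr a)) j
    have hfa : f (.inl a) = f (.inr a) := hj.2.2 hij.symm
    have hk : (Sum.inl a, k) ∈ stalledSet f S := ⟨hj.1, iff_of_true hfa hki⟩
    exact hkj (congrArg Prod.snd (h.unique (y₁ := (.inl a, k)) ⟨hk, rfl, hki.symm⟩ hw))
  · exact not_corona_adj_inr_inr hw.2.1

theorem not_existsUnique_stalledSet_adj_inl_of_mem (hβ : 3 ≤ #β) (haS : a ∈ S)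
    (ha : (Sum.inl a, i) ∉ stalledSet f S)
    (hseen : f (.inl a) ≠ f (.inr a) → i ≠ f (.inr a) → ∃ b ≠ a, b ∈ S ∩ seenFrom f i) :
    ¬∃! w, w ∈ stalledSet f S ∧ (𝓖).Adj (.inl a, i) w := by
  obtain ⟨k, hk, hki⟩ := Cardinal.exists_ne_ne_of_three_le hβ (f (.inr a)) i
  have hpendant : (Sum.inr a, k) ∈ stalledSet f S ∧ (𝓖).Adj (.inl a, i) (.inr a, k) :=
    ⟨⟨haS, hk⟩, rfl, hki.symm⟩
  by_cases hi : i = f (.inr a)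
  · obtain ⟨j, hj, hjk⟩ := Cardinal.exists_ne_ne_of_three_le hβ (f (.inr a)) k
    exact not_existsUnique_of_ne (y := (.inr a, j)) hpendant
      ⟨⟨haS, hj⟩, rfl, by simpa [hi] using hj.symm⟩ (by simpa using hjk.symm)
  · have hfa : f (.inl a) ≠ f (.inr a) := fun hfa => ha ⟨haS, iff_of_true hfa hi⟩
    obtain ⟨b, hba, hb⟩ := hseen hfa hi
    obtain ⟨j, hj, hij⟩ := (mem_inter_seenFrom_iff hβ).1 hb
    exact not_existsUnique_of_ne (y := (.inl b, j)) hpendant ⟨hj, hba.symm, hij⟩ (by simp)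

theorem not_existsUnique_stalledSet_adj_inl_of_notMem (hβ : 3 ≤ #β) (haS : a ∉ S)
    (hseen : ¬∃! b, b ∈ S ∩ seenFrom f i) :
    ¬∃! w, w ∈ stalledSet f S ∧ (𝓖).Adj (.inl a, i) w := by
  rintro ⟨⟨b | b, j⟩, ⟨hj, hab, hij⟩, huniq⟩
  · refine hseen ⟨b, (mem_inter_seenFrom_iff hβ).2 ⟨j, hj, hij⟩, fun c hc => ?_⟩
    obtain ⟨k, hk, hik⟩ := (mem_inter_seenFrom_iff hβ).1 hc
    have hac : a ≠ c := fun h => haS (h ▸ hk.1)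
    exact Sum.inl_injective (congrArg Prod.fst (huniq (.inl c, k) ⟨hk, hac, hik⟩))
  · obtain rfl : a = b := hab
    exact haS hj.1

theorem isFort_stalledSet (hβ : 3 ≤ #β) (hS : S.Nonempty)
    (hmem : ∀ a ∈ S, f (.inl a) ≠ f (.inr a) → ∀ i ≠ f (.inr a), ∃ b ≠ a, b ∈ S ∩ seenFrom f i)
    (hnotMem : ∀ a ∉ S, ∀ i, ¬∃! b, b ∈ S ∩ seenFrom f i) : IsFort 𝓖 (stalledSet f S) := by
  refine ⟨stalledSet_nonempty hβ hS, ?_⟩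
  rintro ⟨a | a, i⟩ ha
  · by_cases haS : a ∈ S
    · exact not_existsUnique_stalledSet_adj_inl_of_mem hβ haS ha fun hfa hi => hmem a haS hfa i hi
    · exact not_existsUnique_stalledSet_adj_inl_of_notMem hβ haS (hnotMem a haS i)
  · exact not_existsUnique_stalledSet_adj_inr hβ ha

theorem isFort_stalledSet_compl_singleton (hι : 3 ≤ #ι) (hβ : 3 ≤ #β)
    (ha : ∀ b ≠ a, b ∉ seenFrom f i) : IsFort 𝓖 (stalledSet f {a}ᶜ) := by
  have hseen {b : ι} (hb : b ≠ a) {j : β} (hj : j ≠ i) : b ∈ {a}ᶜ ∩ seenFrom f j := by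
    have hbi : f (.inr b) = i := by_contra fun h => ha b hb (.inr h)
    exact ⟨hb, .inr (by rw [hbi]; exact hj.symm)⟩
  obtain ⟨b, hba, -⟩ := Cardinal.exists_ne_ne_of_three_le hι a a
  refine isFort_stalledSet hβ ⟨b, hba⟩ ?_ ?_
  · intro c hca _ j hj
    have hci : f (.inr c) = i := by_contra fun h => ha c hca (.inr h)
    obtain ⟨d, hda, hdc⟩ := Cardinal.exists_ne_ne_of_three_le hι a c
    exact ⟨d, hdc, hseen hda (hci ▸ hj)⟩
  · intro _ _ j
    by_cases hj : j = i
    · rintro ⟨c, ⟨hca, hc⟩, -⟩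
      exact ha c hca (hj ▸ hc)
    · obtain ⟨c, hca, hcb⟩ := Cardinal.exists_ne_ne_of_three_le hι a b
      exact not_existsUnique_of_ne (hseen hca hj) (hseen hba hj) hcb

theorem exists_isFort_stalledSet (hι : 3 ≤ #ι) (hβ : 3 ≤ #β) (f : ι ⊕ ι → β) :
    ∃ S, IsFort 𝓖 (stalledSet f S) := by
  by_cases h : ∀ a i, ∃ b ≠ a, b ∈ seenFrom f i
  · have : Nonempty ι := Cardinal.mk_ne_zero_iff.1 (by positivity)
    refine ⟨.univ, isFort_stalledSet hβ Set.univ_nonempty (fun a _ _ i _ => ?_)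
      fun a ha => absurd (Set.mem_univ a) ha⟩
    simpa only [Set.univ_inter] using h a i
  · push Not at h
    obtain ⟨a, i, ha⟩ := h
    exact ⟨{a}ᶜ, isFort_stalledSet_compl_singleton hι hβ ha⟩

theorem two_mul_card_lt_zeroForcingNumber_tensorProd_corona [Fintype ι] [Fintype β]
    (hι : 3 ≤ #ι) (hβ : 3 ≤ #β) :
    2 * Fintype.card ι < zeroForcingNumber 𝓖 := by
  refine lt_zeroForcingNumber fun B hB => ?_
  by_contra! hcard
  obtain ⟨f, hf⟩ := exists_eq_graph_of_card_le (hB.exists_mem_fiber hβ)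
    (by rwa [Fintype.card_sum, ← two_mul])
  obtain ⟨S, hS⟩ := exists_isFort_stalledSet hι hβ f
  exact hB.not_disjoint_of_isFort hS (hf ▸ disjoint_graph_stalledSet)

end StalledSet

/-- The 3-sun as the corona of the triangle. -/
def coronaIsoSun3 : corona (⊤ : SimpleGraph (Fin 3)) ≃g sun3 where
  toEquiv := finSumFinEquiv
  map_rel_iff' := by
    rintro (a | a) (b | b) <;> revert a b <;>
      simp only [corona_adj_inl_inl, corona_adj_inl_inr, corona_adj_inr_inl,
        not_corona_adj_inr_inr, top_adj, sun3, fromRel_adj] <;>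
      decide

theorem stmt1_general {ι β : Type*} [Fintype ι] [Fintype β] (hι : 3 ≤ #ι) (hβ : 3 ≤ #β) :
    2 * Fintype.card ι <
      zeroForcingNumber (tensorProd (corona (⊤ : SimpleGraph ι)) (⊤ : SimpleGraph β)) ∧
    skewZeroForcingNumber (corona (⊤ : SimpleGraph ι)) = 0 :=
  ⟨two_mul_card_lt_zeroForcingNumber_tensorProd_corona hι hβ, skewZeroForcingNumber_corona⟩

/-- `Z(H₃ × K₃) ≥ 7`, and `Z⁻(H₃) = 0`, so the bound
`Z(G × K_n) ≤ (n−2)|V(G)| + 2Z⁻(G)` fails for `G = H₃`, `n = 3`. -/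
theorem stmt1 :
    7 ≤ zeroForcingNumber (tensorProd sun3 (⊤ : SimpleGraph (Fin 3))) ∧
    skewZeroForcingNumber sun3 = 0 := by
  rw [← zeroForcingNumber_congr (tensorProdCongrLeft coronaIsoSun3 ⊤),
    ← skewZeroForcingNumber_congr coronaIsoSun3]
  have h3 : 3 ≤ #(Fin 3) := by simp
  exact stmt1_general h3 h3

end PaperPD
end

section
/- If t ≥ 2 is even and n ≥ 3, then (n−2)t ≤ M(P_t × K_n); that is, there exists a real symmetric matrix A ∈ S(P_t × K_n) with nullity at least (n−2)t (equivalently, rank at most 2t). -/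
namespace PaperPD

open SimpleGraph

variable {V α β : Type*}

/-!
The Kronecker product of two skew-symmetric matrices is symmetric, because the two signs cancel.
Hence if `A` and `B` are skew-symmetric with nonzero patterns `G` and `H`, then `A ⊗ₖ B` lies in
`S(G × H)`, and its rank is at most `rank A * rank B`. Every graph is the pattern of some
skew-symmetric matrix, and the complete graph is the pattern of one of rank at most two, namely
`(f i - f j)` for an injective labelling `f`. So the nullity of `A ⊗ₖ B` on `G × K_n` is at least
`n|G| - 2|G| = (n - 2)|G|`.
-/

section Rank

open Matrix
open scoped Kronecker

variable {l m n p K : Type*} [Field K] [Fintype m] [Fintype p]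

theorem exists_eq_mul_rank (A : Matrix l m K) :
    ∃ (B : Matrix l (Fin A.rank) K) (C : Matrix (Fin A.rank) m K), A = B * C := by
  classical
  let b : Module.Basis (Fin A.rank) K A.mulVecLin.range := Module.finBasis K _
  let c (j : m) : A.mulVecLin.range := A.mulVecLin.rangeRestrict (Pi.single j 1)
  refine ⟨of fun i k ↦ (b k : l → K) i, of fun k j ↦ b.repr (c j) k, ?_⟩
  ext i j
  calc A i j = (c j : l → K) i := (congrFun (A.mulVec_single_one j) i).symm
    _ = ((∑ k, b.repr (c j) k • b k : A.mulVecLin.range) : l → K) i := by rw [b.sum_repr]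
    _ = ∑ k, (b k : l → K) i * b.repr (c j) k := by
      simp only [AddSubmonoidClass.coe_finsetSum, SetLike.val_smul, Finset.sum_apply,
        Pi.smul_apply, smul_eq_mul, mul_comm]

theorem rank_kronecker_le (A : Matrix l m K) (B : Matrix n p K) :
    (A ⊗ₖ B).rank ≤ A.rank * B.rank := by
  obtain ⟨A₁, A₂, hA⟩ := exists_eq_mul_rank A
  obtain ⟨B₁, B₂, hB⟩ := exists_eq_mul_rank B
  calc (A ⊗ₖ B).rank = ((A₁ ⊗ₖ B₁) * (A₂ ⊗ₖ B₂)).rank := by rw [← mul_kronecker_mul, ← hA, ← hB]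
    _ ≤ (A₁ ⊗ₖ B₁).rank := rank_mul_le_left _ _
    _ ≤ Fintype.card (Fin A.rank × Fin B.rank) := rank_le_card_width _
    _ = A.rank * B.rank := by simp only [Fintype.card_prod, Fintype.card_fin]

/-- The matrix `(f i - f j)` of differences of a labelling `f`. For an injective real labelling it
is a skew-symmetric matrix of low rank whose nonzero pattern is the complete graph. -/
def differenceMatrix {R : Type*} [Sub R] (f : m → R) : Matrix m m R :=
  of fun i j ↦ f i - f j

theorem rank_differenceMatrix_le_two {R : Type*} [CommRing R] [StrongRankCondition R] (f : m → R) :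
    (differenceMatrix f).rank ≤ 2 := by
  let U : Matrix m (Fin 2) R := of fun i ↦ ![f i, 1]
  let W : Matrix (Fin 2) m R := of ![1, -f]
  have hUW : differenceMatrix f = U * W := by
    ext i j
    simp [differenceMatrix, U, W, mul_apply, sub_eq_add_neg]
  calc (differenceMatrix f).rank = (U * W).rank := by rw [hUW]
    _ ≤ U.rank := rank_mul_le_left U W
    _ ≤ 2 := U.rank_le_card_width

end Rank

section Nullity

open scoped Kronecker

theorem MatrixOfGraph.nullity_le_maxNullity [Fintype V] [DecidableEq V] {G : SimpleGraph V}
    {A : Matrix V V ℝ} (hA : MatrixOfGraph G A) : nullity A ≤ maxNullity G := by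
  refine le_csSup ⟨Fintype.card V, ?_⟩ ⟨A, hA, rfl⟩
  rintro k ⟨B, -, rfl⟩
  exact Nat.sub_le _ _

theorem card_mul_card_sub_le_nullity_kronecker [Fintype α] [DecidableEq α] [Fintype β]
    [DecidableEq β] (A : Matrix α α ℝ) (B : Matrix β β ℝ) :
    Fintype.card α * Fintype.card β - A.rank * B.rank ≤ nullity (A ⊗ₖ B) := by
  rw [nullity, Fintype.card_prod]
  exact Nat.sub_le_sub_left (rank_kronecker_le A B) _

end Nullity

/-- `A` is a skew-symmetric real matrix whose nonzero pattern is described by the graph `G`, i.e.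
`A ∈ S⁻(G)`. The diagonal needs no exception, since it vanishes in a real skew-symmetric matrix and
`G` has no loops. -/
def SkewMatrixOfGraph (G : SimpleGraph V) (A : Matrix V V ℝ) : Prop :=
  A.transpose = -A ∧ ∀ i j, A i j ≠ 0 ↔ G.Adj i j

namespace SkewMatrixOfGraph

open Matrix
open scoped Kronecker

theorem kronecker {G : SimpleGraph α} {H : SimpleGraph β} {A : Matrix α α ℝ} {B : Matrix β β ℝ}
    (hA : SkewMatrixOfGraph G A) (hB : SkewMatrixOfGraph H B) :
    MatrixOfGraph (tensorProd G H) (A ⊗ₖ B) := by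
  refine ⟨?_, fun p q _ ↦ ?_⟩
  · ext p q
    have hA' : A q.1 p.1 = -A p.1 q.1 := congrFun₂ hA.1 p.1 q.1
    have hB' : B q.2 p.2 = -B p.2 q.2 := congrFun₂ hB.1 p.2 q.2
    rw [transpose_apply, kroneckerMap_apply, kroneckerMap_apply, hA', hB', neg_mul_neg]
  · rw [kroneckerMap_apply, mul_ne_zero_iff, hA.2, hB.2]
    rfl

theorem differenceMatrix_top {f : V → ℝ} (hf : Function.Injective f) :
    SkewMatrixOfGraph ⊤ (differenceMatrix f) := by
  refine ⟨?_, fun i j ↦ ?_⟩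
  · ext i j
    exact (neg_sub (f i) (f j)).symm
  · rw [differenceMatrix, of_apply, sub_ne_zero, hf.ne_iff, top_adj]

theorem hadamard_adjMatrix {G H : SimpleGraph V} [DecidableRel G.Adj] {A : Matrix V V ℝ}
    (hA : SkewMatrixOfGraph H A) (hGH : G ≤ H) : SkewMatrixOfGraph G (A ⊙ G.adjMatrix ℝ) := by
  refine ⟨?_, fun i j ↦ ?_⟩
  · rw [transpose_hadamard, hA.1, transpose_adjMatrix]
    ext i j
    exact neg_mul _ _
  · rw [hadamard_apply, mul_ne_zero_iff, hA.2, adjMatrix_apply, ite_ne_right_iff]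
    exact ⟨fun h ↦ h.2.1, fun h ↦ ⟨hGH h, h, one_ne_zero⟩⟩

end SkewMatrixOfGraph

theorem exists_skewMatrixOfGraph_top_rank_le_two (V : Type*) [Fintype V] :
    ∃ A : Matrix V V ℝ, SkewMatrixOfGraph ⊤ A ∧ A.rank ≤ 2 := by
  obtain ⟨f, hf⟩ := Countable.exists_injective_nat V
  exact ⟨differenceMatrix fun i ↦ (f i : ℝ), .differenceMatrix_top (Nat.cast_injective.comp hf),
    rank_differenceMatrix_le_two _⟩

theorem exists_skewMatrixOfGraph [Countable V] (G : SimpleGraph V) :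
    ∃ A : Matrix V V ℝ, SkewMatrixOfGraph G A := by
  classical
  obtain ⟨f, hf⟩ := Countable.exists_injective_nat V
  have h_top := SkewMatrixOfGraph.differenceMatrix_top (Nat.cast_injective (R := ℝ) |>.comp hf)
  exact ⟨_, h_top.hadamard_adjMatrix le_top⟩

theorem stmt3_general [Fintype α] [DecidableEq α] [Fintype β] [DecidableEq β]
    (G : SimpleGraph α) :
    (Fintype.card β - 2) * Fintype.card α ≤ maxNullity (tensorProd G (⊤ : SimpleGraph β)) ∧
    ∃ A : Matrix (α × β) (α × β) ℝ,
      MatrixOfGraph (tensorProd G (⊤ : SimpleGraph β)) A ∧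
      (Fintype.card β - 2) * Fintype.card α ≤ nullity A := by
  obtain ⟨A, hA⟩ := exists_skewMatrixOfGraph G
  obtain ⟨B, hB, hB_rank⟩ := exists_skewMatrixOfGraph_top_rank_le_two β
  have hAB := hA.kronecker hB
  have h_nullity := calc
    (Fintype.card β - 2) * Fintype.card α
        = Fintype.card α * Fintype.card β - Fintype.card α * 2 := by
      rw [mul_comm, Nat.mul_sub]
    _ ≤ Fintype.card α * Fintype.card β - A.rank * B.rank :=
      Nat.sub_le_sub_left (Nat.mul_le_mul A.rank_le_card_width hB_rank) _
    _ ≤ nullity (A.kronecker B) := card_mul_card_sub_le_nullity_kronecker A B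
  exact ⟨h_nullity.trans hAB.nullity_le_maxNullity, _, hAB, h_nullity⟩

/-- If `t ≥ 2` is even and `n ≥ 3`, then `(n−2)t ≤ M(P_t × K_n)`;
that is, there is a symmetric matrix `A ∈ S(P_t × K_n)` with nullity at least `(n−2)t`. -/
theorem stmt3 (t n : ℕ) (ht : 2 ≤ t) (hte : Even t) (hn : 3 ≤ n) :
    (n - 2) * t ≤ maxNullity (tensorProd (pathGraph t) (⊤ : SimpleGraph (Fin n))) ∧
    ∃ A : Matrix (Fin t × Fin n) (Fin t × Fin n) ℝ,
      MatrixOfGraph (tensorProd (pathGraph t) (⊤ : SimpleGraph (Fin n))) A ∧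
      (n - 2) * t ≤ nullity A := by
  simpa only [Fintype.card_fin] using stmt3_general (β := Fin n) (pathGraph t)

end PaperPD
end

section
/- Let G be a finite simple graph that has at least one edge, and let A ∈ S(G) be any real symmetric matrix whose off-diagonal nonzero pattern is given by G. Then ⌈null(A)/Δ(G)⌉ ≤ γ_P(G), where null(A) is the nullity of A, Δ(G) the maximum degree, and γ_P(G) the power domination number of G. -/
namespace PaperPD

open SimpleGraph

variable {V α β : Type*}

/-!
A kernel vector of `A` that vanishes on a blue set `B` vanishes wherever the color change rule
propagates: if `x` is zero at `u` and at all neighbors of `u` except `w`, then row `u` of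
`A x = 0` reads `A u w * x w = 0`. So a kernel vector is determined by its restriction to a zero
forcing set, and the nullity is at most `Z(G)`.

In turn `Z(G) ≤ γ_P(G) Δ(G)`: to color `N[v]` blue it suffices to start from `v` and all but one
of its neighbors, the last being forced by `v`. These are only `deg v` vertices, and taking them
for each `v` in a power dominating set gives a zero forcing set.
-/

section ZeroForcing

variable {G : SimpleGraph V} {B C : Set V}

theorem ZFClosure.trans {v : V} (hv : ZFClosure G C v) (hC : ∀ u ∈ C, ZFClosure G B u) :
    ZFClosure G B v := by
  induction hv with
  | init v hv => exact hC v hv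
  | force u w _ huw _ ihu ih => exact .force u w ihu huw ih

theorem ZFClosure.mono {v : V} (hCB : C ⊆ B) (hv : ZFClosure G C v) : ZFClosure G B v :=
  hv.trans fun u hu => .init u (hCB hu)

variable [Fintype V]

theorem zeroForcingNumber_le_card {B : Finset V} (hB : IsZeroForcingSet G (B : Set V)) :
    zeroForcingNumber G ≤ B.card :=
  Nat.sInf_le ⟨B, rfl, hB⟩

theorem exists_isZeroForcingSet_card_eq (G : SimpleGraph V) :
    ∃ B : Finset V, B.card = zeroForcingNumber G ∧ IsZeroForcingSet G (B : Set V) :=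
  Nat.sInf_mem (s := {k | ∃ B : Finset V, B.card = k ∧ IsZeroForcingSet G ↑B})
    ⟨_, Finset.univ, rfl, fun v => .init v (by simp)⟩

theorem exists_isPowerDominatingSet_card_eq (G : SimpleGraph V) :
    ∃ S : Finset V, S.card = powerDominationNumber G ∧ IsPowerDominatingSet G (S : Set V) :=
  Nat.sInf_mem (s := {k | ∃ S : Finset V, S.card = k ∧ IsPowerDominatingSet G ↑S})
    ⟨_, Finset.univ, rfl, fun v => .init v (.inl (by simp))⟩

end ZeroForcing

section Nullity

variable {R : Type*}

/-- The off-diagonal nonzero pattern of `A` is described by `G`. This is membership in `S(G)`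
without symmetry and over arbitrary coefficients; the diagonal of `A` is unconstrained. -/
def HasOffDiagPattern [Zero R] (G : SimpleGraph V) (A : Matrix V V R) : Prop :=
  ∀ i j, i ≠ j → (A i j ≠ 0 ↔ G.Adj i j)

variable [Fintype V] {G : SimpleGraph V} {A : Matrix V V R}

theorem HasOffDiagPattern.eq_zero_of_zfClosure [NonUnitalNonAssocSemiring R] [NoZeroDivisors R]
    (hA : HasOffDiagPattern G A) {B : Set V} {x : V → R} (hx : A.mulVec x = 0)
    (hB : ∀ v ∈ B, x v = 0) {v : V} (hv : ZFClosure G B v) : x v = 0 := by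
  induction hv with
  | init v hv => exact hB v hv
  | force u w _ huw _ ihu ih =>
    have other_terms : ∀ j ≠ w, A u j * x j = 0 := by
      intro j hjw
      rcases eq_or_ne u j with rfl | huj
      · rw [ihu, mul_zero]
      · by_cases hj : G.Adj u j
        · rw [ih j hj hjw, mul_zero]
        · rw [not_not.1 (mt (hA u j huj).1 hj), zero_mul]
    have row_u : A u w * x w = 0 := by
      rw [← Fintype.sum_eq_single w other_terms]
      exact congrFun hx u
    exact (mul_eq_zero.1 row_u).resolve_left ((hA u w huw.ne).2 huw)

variable [CommRing R] [IsDomain R]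

theorem HasOffDiagPattern.finrank_ker_le_card (hA : HasOffDiagPattern G A) {B : Finset V}
    (hB : IsZeroForcingSet G (B : Set V)) :
    Module.finrank R (LinearMap.ker A.mulVecLin) ≤ B.card := by
  let restrict : LinearMap.ker A.mulVecLin →ₗ[R] (B → R) :=
    (LinearMap.funLeft R R (Subtype.val : B → V)).comp (LinearMap.ker A.mulVecLin).subtype
  have restrict_injective : Function.Injective restrict := by
    rw [← LinearMap.ker_eq_bot, LinearMap.ker_eq_bot']
    rintro ⟨x, hx⟩ hxB
    ext v
    exact hA.eq_zero_of_zfClosure hx (fun b hb => congrFun hxB ⟨b, hb⟩) (hB v)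
  simpa using LinearMap.finrank_le_finrank_of_injective restrict_injective

theorem HasOffDiagPattern.finrank_ker_le_zeroForcingNumber (hA : HasOffDiagPattern G A) :
    Module.finrank R (LinearMap.ker A.mulVecLin) ≤ zeroForcingNumber G := by
  obtain ⟨B, hcard, hB⟩ := exists_isZeroForcingSet_card_eq G
  exact hcard ▸ hA.finrank_ker_le_card hB

theorem nullity_eq_finrank_ker [DecidableEq V] (A : Matrix V V ℝ) :
    nullity A = Module.finrank ℝ (LinearMap.ker A.mulVecLin) := by
  have rank_nullity := A.mulVecLin.finrank_range_add_finrank_ker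
  rw [Module.finrank_fintype_fun_eq_card] at rank_nullity
  exact Nat.sub_eq_of_eq_add' rank_nullity.symm

end Nullity

section PowerDomination

variable {G : SimpleGraph V}

theorem deg_eq_degree (G : SimpleGraph V) (v : V) [Fintype (G.neighborSet v)] :
    deg G v = G.degree v :=
  Set.ncard_eq_toFinset_card' _

theorem mem_closedNbhd_iff_exists {S : Set V} {v : V} :
    v ∈ closedNbhd G S ↔ ∃ u ∈ S, v ∈ closedNbhd G {u} := by
  simp only [closedNbhd, Set.mem_union, Set.mem_ofPred_eq, Set.mem_singleton_iff,
    exists_eq_left, and_or_left, exists_or, exists_eq_right']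

-- The `1` in `max 1 (deg G v)` accounts for isolated vertices.
theorem exists_card_le_forall_mem_closedNbhd_zfClosure (G : SimpleGraph V) (v : V)
    [Finite (G.neighborSet v)] :
    ∃ B : Finset V, B.card ≤ max 1 (deg G v) ∧ ∀ u ∈ closedNbhd G {v}, ZFClosure G B u := by
  classical
  cases nonempty_fintype (G.neighborSet v)
  by_cases hv : ∃ w, G.Adj v w
  · obtain ⟨w, hvw⟩ := hv
    let B := insert v ((G.neighborFinset v).erase w)
    have v_blue : ZFClosure G (B : Set V) v := .init v (by simp [B])
    have others_blue : ∀ u, G.Adj v u → u ≠ w → ZFClosure G (B : Set V) u :=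
      fun u hvu huw => .init u (by simp [B, hvu, huw])
    refine ⟨B, ?_, ?_⟩
    · calc B.card ≤ ((G.neighborFinset v).erase w).card + 1 := Finset.card_insert_le _ _
        _ = deg G v := by
          rw [Finset.card_erase_add_one (by simpa using hvw), card_neighborFinset_eq_degree,
            deg_eq_degree]
        _ ≤ max 1 (deg G v) := le_max_right _ _
    · rintro u (rfl | ⟨_, rfl, hvu⟩)
      · exact v_blue
      · rcases eq_or_ne u w with rfl | huw
        · exact .force _ u v_blue hvu others_blue
        · exact others_blue u hvu huw
  · refine ⟨{v}, by simp, ?_⟩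
    rintro u (rfl | ⟨_, rfl, hvu⟩)
    · exact .init u (by simp)
    · exact absurd ⟨u, hvu⟩ hv

variable [Fintype V]

theorem deg_le_maxDeg (G : SimpleGraph V) (v : V) : deg G v ≤ maxDeg G :=
  Finset.le_sup (f := deg G) (Finset.mem_univ v)

theorem maxDeg_pos_of_adj {u v : V} (huv : G.Adj u v) : 0 < maxDeg G :=
  ((Set.ncard_pos (Set.toFinite _)).2 ⟨v, huv⟩ : 0 < deg G u).trans_le (deg_le_maxDeg G u)

theorem IsPowerDominatingSet.zeroForcingNumber_le {S : Finset V}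
    (hS : IsPowerDominatingSet G (S : Set V)) :
    zeroForcingNumber G ≤ S.card * max 1 (maxDeg G) := by
  classical
  choose B hBcard hB using fun v => exists_card_le_forall_mem_closedNbhd_zfClosure G v
  have closedNbhd_blue : ∀ v ∈ closedNbhd G (S : Set V),
      ZFClosure G (S.biUnion B : Set V) v := by
    intro v hv
    obtain ⟨u, hu, hvu⟩ := mem_closedNbhd_iff_exists.1 hv
    exact (hB u v hvu).mono (by exact_mod_cast Finset.subset_biUnion_of_mem B hu)
  have forcing : IsZeroForcingSet G (S.biUnion B : Set V) :=
    fun v => (hS v).trans closedNbhd_blue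
  calc zeroForcingNumber G ≤ (S.biUnion B).card :=
        zeroForcingNumber_le_card (by exact_mod_cast forcing)
    _ ≤ S.card * max 1 (maxDeg G) := Finset.card_biUnion_le_card_mul S B _ fun v _ =>
        (hBcard v).trans (max_le_max_left 1 (deg_le_maxDeg G v))

theorem zeroForcingNumber_le_powerDominationNumber_mul (G : SimpleGraph V) :
    zeroForcingNumber G ≤ powerDominationNumber G * max 1 (maxDeg G) := by
  obtain ⟨S, hcard, hS⟩ := exists_isPowerDominatingSet_card_eq G
  exact hcard ▸ hS.zeroForcingNumber_le

end PowerDomination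

theorem stmt10_general {R : Type*} [CommRing R] [IsDomain R] [Fintype V] {G : SimpleGraph V}
    (hE : ∃ u v, G.Adj u v) {A : Matrix V V R} (hA : HasOffDiagPattern G A) :
    ⌈(Module.finrank R (LinearMap.ker A.mulVecLin) : ℚ) / (maxDeg G : ℚ)⌉ ≤
      (powerDominationNumber G : ℤ) := by
  obtain ⟨u, v, huv⟩ := hE
  have hΔ : 0 < maxDeg G := maxDeg_pos_of_adj huv
  have hle : Module.finrank R (LinearMap.ker A.mulVecLin) ≤
      powerDominationNumber G * maxDeg G :=
    calc _ ≤ zeroForcingNumber G := hA.finrank_ker_le_zeroForcingNumber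
      _ ≤ powerDominationNumber G * max 1 (maxDeg G) :=
        zeroForcingNumber_le_powerDominationNumber_mul G
      _ = powerDominationNumber G * maxDeg G := by rw [max_eq_right hΔ]
  rw [Int.ceil_le, div_le_iff₀ (by exact_mod_cast hΔ)]
  exact_mod_cast hle

/-- If `G` has at least one edge and `A ∈ S(G)`, then
`⌈null(A)/Δ(G)⌉ ≤ γ_P(G)`. -/
theorem stmt10 {V : Type*} [Fintype V] [DecidableEq V] (G : SimpleGraph V)
    (hE : ∃ u v, G.Adj u v) (A : Matrix V V ℝ) (hA : MatrixOfGraph G A) :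
    ⌈(nullity A : ℚ) / (maxDeg G : ℚ)⌉ ≤ (powerDominationNumber G : ℤ) := by
  simpa only [nullity_eq_finrank_ker] using stmt10_general hE hA.2

end PaperPD
end

section
/- Let n ≥ 3 and t ≥ 2. Then γ_P(P_t × K_n) ≤ ⌈t/2⌉ if t ≢ 2 (mod 4), and γ_P(P_t × K_n) ≤ t/2 + 1 if t ≡ 2 (mod 4). -/
namespace PaperPD

open SimpleGraph

variable {V α β : Type*}

/-!
Let `D` be a total dominating and skew zero forcing set of `G`, and `z` a universal vertex of `H`.
Then `D × {z}` power dominates `G × H`: total domination puts every vertex off the layer `V(G) × {z}`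
into the closed neighborhood, so that inside this layer a force `u → w` of the skew process on `G`,
whose `u` need not be blue, is carried out by the blue vertex `(u, o)` for any fixed `o ≠ z`.

In the path on `0, …, t - 1` the vertices congruent to `1` or `2` modulo `4`, together with `t - 2`,
form such a set, of the size required.
-/

section TensorProd

variable {G : SimpleGraph α} {H : SimpleGraph β} {D : Set α} {z : β}

theorem IsPowerDominatingSet.powerDominationNumber_le_card [Fintype V] {K : SimpleGraph V}
    {S : Finset V} (hS : IsPowerDominatingSet K ↑S) : powerDominationNumber K ≤ S.card :=
  Nat.sInf_le ⟨S, rfl, hS⟩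

theorem IsTotalDominatingSet.mem_closedNbhd_tensorProd (hD : IsTotalDominatingSet G D)
    (hz : H.IsUniversal z) (a : α) {b : β} (hb : b ≠ z) :
    (a, b) ∈ closedNbhd (tensorProd G H) (D ×ˢ {z}) := by
  obtain ⟨u, huD, hua⟩ := hD a
  exact Or.inr ⟨(u, z), ⟨huD, rfl⟩, hua, hz hb.symm⟩

theorem IsTotalDominatingSet.zfClosure_tensorProd [Nontrivial β] (hD : IsTotalDominatingSet G D)
    (hz : H.IsUniversal z) {a : α} (ha : SkewZFClosure G D a) :
    ZFClosure (tensorProd G H) (closedNbhd (tensorProd G H) (D ×ˢ {z})) (a, z) := by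
  induction ha with
  | init a ha => exact .init _ (Or.inl ⟨ha, rfl⟩)
  | force u w huw _ ih =>
    obtain ⟨o, ho⟩ := exists_ne z
    refine .force (u, o) (w, z) (.init _ (hD.mem_closedNbhd_tensorProd hz u ho))
      ⟨huw, (hz ho.symm).symm⟩ ?_
    rintro ⟨k, c⟩ ⟨huk, -⟩ hne
    by_cases hc : c = z
    · subst hc
      exact ih k huk fun hkw => hne (by rw [hkw])
    · exact .init _ (hD.mem_closedNbhd_tensorProd hz k hc)

theorem IsTotalDominatingSet.isPowerDominatingSet_tensorProd [Nontrivial β]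
    (hD : IsTotalDominatingSet G D) (hforce : IsSkewZeroForcingSet G D) (hz : H.IsUniversal z) :
    IsPowerDominatingSet (tensorProd G H) (D ×ˢ {z}) := by
  rintro ⟨a, b⟩
  by_cases hb : b = z
  · subst hb
    exact hD.zfClosure_tensorProd hz (hforce a)
  · exact .init _ (hD.mem_closedNbhd_tensorProd hz a hb)

theorem powerDominationNumber_tensorProd_le_card [Fintype α] [Fintype β] [Nontrivial β]
    {D : Finset α} (hD : IsTotalDominatingSet G ↑D) (hforce : IsSkewZeroForcingSet G ↑D)
    (hz : H.IsUniversal z) : powerDominationNumber (tensorProd G H) ≤ D.card := by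
  have hS : IsPowerDominatingSet (tensorProd G H) ↑(D ×ˢ ({z} : Finset β)) := by
    simpa only [Finset.coe_product, Finset.coe_singleton] using
      hD.isPowerDominatingSet_tensorProd hforce hz
  simpa only [Finset.card_product, Finset.card_singleton, mul_one] using
    hS.powerDominationNumber_le_card

end TensorProd

section PathGraph

/-- The set of vertices of the path on `0, …, t - 1` that serves both as a total dominating set and
as a skew zero forcing set. The pairs `4k + 1, 4k + 2` suffice up to the right end; the vertex
`t - 2`, a new one exactly when `t ≡ 1, 2 (mod 4)`, takes care of the last vertex. -/
def pathForcingSet (t : ℕ) : Finset (Fin t) :=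
  {i ∈ Finset.range t | i % 4 = 1 ∨ i % 4 = 2 ∨ i + 2 = t}.attachFin fun _ hi =>
    Finset.mem_range.1 (Finset.mem_filter.1 hi).1

variable {t : ℕ}

theorem mem_pathForcingSet {i : Fin t} :
    i ∈ pathForcingSet t ↔ (i : ℕ) % 4 = 1 ∨ (i : ℕ) % 4 = 2 ∨ (i : ℕ) + 2 = t := by
  simp only [pathForcingSet, Finset.mem_attachFin, Finset.mem_filter, Finset.mem_range, i.isLt,
    true_and]

theorem isTotalDominatingSet_pathForcingSet (ht : 2 ≤ t) :
    IsTotalDominatingSet (pathGraph t) ↑(pathForcingSet t) := by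
  intro i
  simp only [Finset.mem_coe, mem_pathForcingSet, pathGraph_adj]
  by_cases hright : (i : ℕ) + 1 < t ∧ ((i : ℕ) % 4 = 0 ∨ (i : ℕ) % 4 = 1 ∨ (i : ℕ) + 3 = t)
  · exact ⟨⟨i + 1, hright.1⟩, by grind, by grind⟩
  · exact ⟨⟨i - 1, by lia⟩, by grind, by grind⟩

theorem isSkewZeroForcingSet_pathForcingSet (ht : 2 ≤ t) :
    IsSkewZeroForcingSet (pathGraph t) ↑(pathForcingSet t) := by
  intro i
  by_cases hi : i ∈ pathForcingSet t
  · exact .init i hi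
  suffices ∃ u, (pathGraph t).Adj u i ∧
      ∀ x, (pathGraph t).Adj u x → x ≠ i → x ∈ pathForcingSet t by
    obtain ⟨u, hui, hu⟩ := this
    exact .force u i hui fun x hux hxi => .init x (hu x hux hxi)
  simp only [mem_pathForcingSet, pathGraph_adj, ne_eq, Fin.ext_iff] at hi ⊢
  by_cases hright : (i : ℕ) + 1 < t ∧ (i : ℕ) % 4 = 0
  · exact ⟨⟨i + 1, hright.1⟩, by grind, by grind⟩
  · exact ⟨⟨i - 1, by lia⟩, by grind, by grind⟩

theorem count_mod_four_eq_one_or_two (t : ℕ) :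
    Nat.count (fun i => i % 4 = 1 ∨ i % 4 = 2) t = (t + 2) / 4 + (t + 1) / 4 := by
  induction t with
  | zero => rfl
  | succ t ih =>
    rw [Nat.count_succ, ih]
    split_ifs <;> lia

theorem card_pathForcingSet (ht : 2 ≤ t) :
    (pathForcingSet t).card = t / 2 + if 4 ∣ t then 0 else 1 := by
  obtain ⟨s, rfl⟩ := Nat.exists_eq_add_of_le' ht
  have hcount : Nat.count (fun i => i % 4 = 1 ∨ i % 4 = 2 ∨ i + 2 = s + 2) s =
      Nat.count (fun i => i % 4 = 1 ∨ i % 4 = 2) s := by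
    simp only [Nat.count_eq_card_filter_range]
    exact congrArg Finset.card (Finset.filter_congr fun i hi => by grind)
  rw [pathForcingSet, Finset.card_attachFin, ← Nat.count_eq_card_filter_range, Nat.count_succ,
    Nat.count_succ, hcount, count_mod_four_eq_one_or_two]
  split_ifs <;> lia

end PathGraph

theorem stmt11_general [Fintype β] [Nontrivial β] {H : SimpleGraph β} {z : β}
    (hz : H.IsUniversal z) {t : ℕ} (ht : 2 ≤ t) :
    (t % 4 ≠ 2 → powerDominationNumber (tensorProd (pathGraph t) H) ≤ (t + 1) / 2) ∧
    (t % 4 = 2 → powerDominationNumber (tensorProd (pathGraph t) H) ≤ t / 2 + 1) := by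
  have hle : powerDominationNumber (tensorProd (pathGraph t) H) ≤
      t / 2 + if 4 ∣ t then 0 else 1 :=
    (powerDominationNumber_tensorProd_le_card (isTotalDominatingSet_pathForcingSet ht)
      (isSkewZeroForcingSet_pathForcingSet ht) hz).trans_eq (card_pathForcingSet ht)
  constructor <;> intro hmod <;> split_ifs at hle <;> lia

/-- For `n ≥ 3` and `t ≥ 2`, `γ_P(P_t × K_n) ≤ ⌈t/2⌉` if
`t ≢ 2 (mod 4)`, and `γ_P(P_t × K_n) ≤ t/2 + 1` if `t ≡ 2 (mod 4)`. -/
theorem stmt11 (n t : ℕ) (hn : 3 ≤ n) (ht : 2 ≤ t) :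
    (t % 4 ≠ 2 →
      powerDominationNumber (tensorProd (pathGraph t) (⊤ : SimpleGraph (Fin n))) ≤ (t + 1) / 2) ∧
    (t % 4 = 2 →
      powerDominationNumber (tensorProd (pathGraph t) (⊤ : SimpleGraph (Fin n))) ≤ t / 2 + 1) := by
  have : Nontrivial (Fin n) := Fin.nontrivial_iff_two_le.2 (by lia)
  exact stmt11_general (z := ⟨0, by lia⟩) (fun _ hne => hne) ht

end PaperPD
end
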